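/- Let p ≥ 5 be prime and n ≥ 1 an integer, and set m = (2n+1)p - 4·N(p/6). Then m is odd, and: if p ≡ 1 (mod 6) then 3m-2 = (3(2n+1)-2)·p, while if p ≡ 5 (mod 6) then 3m+2 = (3(2n+1)-2)·p. In either case p divides one of 3m-2, 3m+2 with cofactor 3(2n+1)-2 > 1, so 3m-2 and 3m+2 are not both prime; i.e., m is a non-rank. -/

import Mathlib

/-!
A prime `p ≥ 5` is `≡ ±1 (mod 6)`, so the integer nearest to `p / 6` is `(p ∓ 1) / 6`, that is
`12 · N(p/6) = 2p ∓ 2`. Hence `3m ∓ 2 = 3(2n+1)p - 2p`, a product of two integers greater than `1`.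
-/

/-- Adding `ε ∈ {1, -1}` to a multiple `6k` does not change the integer nearest to its sixth. -/
lemma round_div_six (k ε : ℤ) (hε : ε = 1 ∨ ε = -1) :
    round (((6 * k + ε : ℤ) : ℚ) / 6) = k := by
  rw [round_eq, Int.floor_eq_iff]
  rcases hε with rfl | rfl <;> push_cast <;> constructor <;> linarith

lemma not_prime_mul_of_one_lt (a b : ℤ) (ha : 1 < a) (hb : 1 < b) : ¬ Prime (a * b) := by
  intro h
  rcases h.irreducible.isUnit_or_isUnit rfl with h | h <;> rw [Int.isUnit_iff] at h <;> omega

lemma prime_emod_six (p : ℤ) (hp : Prime p) (h5 : 5 ≤ p) : p % 6 = 1 ∨ p % 6 = 5 := by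
  have h2 : p % 2 ≠ 0 := fun h =>
    not_prime_mul_of_one_lt 2 (p / 2) (by norm_num) (by omega) (by
      rwa [show 2 * (p / 2) = p by omega])
  have h3 : p % 3 ≠ 0 := fun h =>
    not_prime_mul_of_one_lt 3 (p / 3) (by norm_num) (by omega) (by
      rwa [show 3 * (p / 3) = p by omega])
  omega

/-- Lemma 2.5 (minus case): for a prime `p ≥ 5` and integer `n ≥ 1`, the odd number
`m = (2n+1)p - 4·N(p/6)` is a non-rank: if `p ≡ 1 (mod 6)` then
`3m-2 = (3(2n+1)-2)p`, if `p ≡ 5 (mod 6)` then `3m+2 = (3(2n+1)-2)p`, and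
`3m-2`, `3m+2` are not both prime. -/
theorem nonrank_minus (p : ℤ) (hp : Prime p) (h5 : 5 ≤ p) (n : ℤ) (hn : 1 ≤ n)
    (m : ℤ) (hm : m = (2 * n + 1) * p - 4 * round ((p : ℚ) / 6)) :
    Odd m ∧
    (p % 6 = 1 → 3 * m - 2 = (3 * (2 * n + 1) - 2) * p) ∧
    (p % 6 = 5 → 3 * m + 2 = (3 * (2 * n + 1) - 2) * p) ∧
    1 < 3 * (2 * n + 1) - 2 ∧
    ¬(Prime (3 * m - 2) ∧ Prime (3 * m + 2)) := by
  have hmod := prime_emod_six p hp h5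
  have hc : 1 < 3 * (2 * n + 1) - 2 := by omega
  have h1 : p % 6 = 1 → 3 * m - 2 = (3 * (2 * n + 1) - 2) * p := by
    intro h
    obtain ⟨k, rfl⟩ : ∃ k, p = 6 * k + 1 := ⟨p / 6, by omega⟩
    rw [round_div_six k 1 (Or.inl rfl)] at hm
    rw [hm]; ring
  have h2 : p % 6 = 5 → 3 * m + 2 = (3 * (2 * n + 1) - 2) * p := by
    intro h
    obtain ⟨k, rfl⟩ : ∃ k, p = 6 * k + -1 := ⟨p / 6 + 1, by omega⟩
    rw [round_div_six k (-1) (Or.inr rfl)] at hm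
    rw [hm]; ring
  refine ⟨?_, h1, h2, hc, ?_⟩
  · have hodd : Odd p := Int.odd_iff.2 (by omega)
    rw [hm]
    exact ((odd_two_mul_add_one n).mul hodd).sub_even (Even.mul_right (by decide) _)
  · rintro ⟨ha, hb⟩
    rcases hmod with h | h
    · rw [h1 h] at ha
      exact not_prime_mul_of_one_lt _ _ hc (by omega) ha
    · rw [h2 h] at hb
      exact not_prime_mul_of_one_lt _ _ hc (by omega) hb
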